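/- Let g : ℝ^n → ℝ be a polynomial, let 0 ≤ λ ≤ 1, and let β ∈ ℕ^n be a multi-index. Then E_{x∼N(0,1)^n}[ (ĝ_{λ|x}(β))² ] = Σ_{γ ≥ β} ( ∏_{j=1}^n binom(γ_j, β_j)·λ^{β_j}·(1−λ)^{γ_j−β_j} ) · ĝ(γ)², where the sum is over multi-indices γ ∈ ℕ^n with γ_j ≥ β_j for all j, and ĝ_{λ|x}(β) denotes the β-th Hermite coefficient of the zoom g_{λ|x}. -/

import Mathlib

open MeasureTheory ProbabilityTheory MvPolynomial

/-- The standard Gaussian measure `N(0,1)^n` on `ℝ^n`. -/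
noncomputable def gaussianN (n : ℕ) : Measure (Fin n → ℝ) :=
  Measure.pi fun _ => gaussianReal 0 1

/-- The normalized probabilists' Hermite polynomial `h_k = H_k / √(k!)`. -/
noncomputable def hermiteFn (k : ℕ) (t : ℝ) : ℝ :=
  ((Polynomial.hermite k).map (Int.castRingHom ℝ)).eval t / Real.sqrt (Nat.factorial k)

/-- The multivariate Hermite polynomial `h_α(x) = ∏ i, h_{α i}(x i)`. -/
noncomputable def hermiteMv {n : ℕ} (α : Fin n → ℕ) (x : Fin n → ℝ) : ℝ :=
  ∏ i, hermiteFn (α i) (x i)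

/-- Hermite coefficient `f̂(α) = E_{x ∼ N(0,1)^n}[f(x)·h_α(x)]` of a function. -/
noncomputable def hermiteCoeffF {n : ℕ} (f : (Fin n → ℝ) → ℝ) (α : Fin n → ℕ) : ℝ :=
  ∫ x, f x * hermiteMv α x ∂(gaussianN n)

/-- Hermite coefficient `ĝ(α)` of a polynomial. -/
noncomputable def hermiteCoeff {n : ℕ} (g : MvPolynomial (Fin n) ℝ) (α : Fin n → ℕ) : ℝ :=
  hermiteCoeffF (fun x => eval x g) α

/-- The squared Gaussian 2-norm `‖g‖₂² = E_{x ∼ N(0,1)^n}[g(x)²]`. -/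
noncomputable def norm2sq {n : ℕ} (g : MvPolynomial (Fin n) ℝ) : ℝ :=
  ∫ x, (eval x g) ^ 2 ∂(gaussianN n)

/-- The `λ`-zoom of `g` at `x`: `g_{λ|x}(y) = g(√(1-λ)·x + √λ·y)`, as a polynomial in `y`. -/
noncomputable def zoom {n : ℕ} (g : MvPolynomial (Fin n) ℝ) (lam : ℝ) (x : Fin n → ℝ) :
    MvPolynomial (Fin n) ℝ :=
  aeval (fun i => C (Real.sqrt (1 - lam) * x i) + C (Real.sqrt lam) * X i) g

/-- `HyperVar_R[g^{≥m}] = Σ_{|α| ≥ m} R^{2|α|}·ĝ(α)²`. -/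
noncomputable def hyperVarGE {n : ℕ} (R : ℝ) (m : ℕ) (g : MvPolynomial (Fin n) ℝ) : ℝ :=
  ∑' α : Fin n → ℕ, if m ≤ ∑ i, α i then R ^ (2 * ∑ i, α i) * hermiteCoeff g α ^ 2 else 0

/-- `HyperVar_R[g] = Σ_{α ≠ 0} R^{2|α|}·ĝ(α)²`. -/
noncomputable def hyperVar {n : ℕ} (R : ℝ) (g : MvPolynomial (Fin n) ℝ) : ℝ :=
  hyperVarGE R 1 g

/-- A nice distribution of polynomials of degree at most `d` on `ℝ^n`, indexed by
`υ ∈ ℝ^I`: each `g υ` has degree at most `d` and each coefficient of `g υ` is a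
polynomial of degree at most `d` in `υ`. -/
def NiceFamily (n I d : ℕ) (g : (Fin I → ℝ) → MvPolynomial (Fin n) ℝ) : Prop :=
  (∀ υ, (g υ).totalDegree ≤ d) ∧
  ∀ m : Fin n →₀ ℕ, ∃ P : MvPolynomial (Fin I) ℝ,
    P.totalDegree ≤ d ∧ ∀ υ, coeff m (g υ) = eval υ P

/-- The probabilists' Hermite polynomial with real coefficients. -/
noncomputable def hermiteReal (k : ℕ) : Polynomial ℝ :=
  (Polynomial.hermite k).map (Int.castRingHom ℝ)

theorem hermiteReal_zero : hermiteReal 0 = 1 := by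
  simp [hermiteReal]

theorem hermiteReal_succ (k : ℕ) :
    hermiteReal (k + 1) = Polynomial.X * hermiteReal k - (hermiteReal k).derivative := by
  simp [hermiteReal, Polynomial.hermite_succ, Polynomial.derivative_map]

theorem derivative_hermiteReal_succ (k : ℕ) :
    (hermiteReal (k + 1)).derivative = ((k : Polynomial ℝ) + 1) * hermiteReal k := by
  induction k with
  | zero => simp [hermiteReal_succ, hermiteReal_zero]
  | succ k ih =>
    rw [hermiteReal_succ (k + 1), Polynomial.derivative_sub, Polynomial.derivative_mul, ih,
      Polynomial.derivative_mul, hermiteReal_succ k]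
    simp
    ring

theorem hermiteReal_add_two (k : ℕ) :
    hermiteReal (k + 2) =
      Polynomial.X * hermiteReal (k + 1) - ((k : Polynomial ℝ) + 1) * hermiteReal k := by
  rw [hermiteReal_succ (k + 1), derivative_hermiteReal_succ]

theorem hermiteFn_eq (k : ℕ) (t : ℝ) :
    hermiteFn k t = (hermiteReal k).eval t / Real.sqrt (Nat.factorial k) := rfl

theorem hermiteFn_zero (t : ℝ) : hermiteFn 0 t = 1 := by
  simp [hermiteFn_eq, hermiteReal_zero]

theorem Polynomial.integrable_eval_gaussianReal (p : Polynomial ℝ) :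
    Integrable (fun y => p.eval y) (gaussianReal 0 1) := by
  induction p using Polynomial.induction_on' with
  | add p q hp hq =>
    simp only [Polynomial.eval_add]
    exact hp.add hq
  | monomial k a =>
    have h : Integrable (fun y : ℝ => y ^ k) (gaussianReal 0 1) := by
      have := (memLp_id_gaussianReal (μ := 0) (v := 1) (k : NNReal)).integrable_norm_pow'
      refine (integrable_norm_iff (by fun_prop)).1 ?_
      simpa using this
    simpa using h.const_mul a

theorem Polynomial.integral_eval_add_gaussianReal (p q : Polynomial ℝ) :
    ∫ y, (p + q).eval y ∂(gaussianReal 0 1) =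
      ∫ y, p.eval y ∂(gaussianReal 0 1) + ∫ y, q.eval y ∂(gaussianReal 0 1) := by
  simp only [Polynomial.eval_add]
  exact integral_add p.integrable_eval_gaussianReal q.integrable_eval_gaussianReal

theorem Polynomial.integral_eval_sub_gaussianReal (p q : Polynomial ℝ) :
    ∫ y, (p - q).eval y ∂(gaussianReal 0 1) =
      ∫ y, p.eval y ∂(gaussianReal 0 1) - ∫ y, q.eval y ∂(gaussianReal 0 1) := by
  simp only [Polynomial.eval_sub]
  exact integral_sub p.integrable_eval_gaussianReal q.integrable_eval_gaussianReal

/-- Gaussian integration by parts for polynomials. -/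
theorem Polynomial.integral_X_mul_gaussianReal (p : Polynomial ℝ) :
    ∫ y, (Polynomial.X * p).eval y ∂(gaussianReal 0 1) =
      ∫ y, p.derivative.eval y ∂(gaussianReal 0 1) := by
  have key (q : Polynomial ℝ) :
      Integrable (fun y => gaussianPDFReal 0 1 y * q.eval y) volume := by
    have h := q.integrable_eval_gaussianReal
    rw [gaussianReal_of_var_ne_zero _ one_ne_zero,
      integrable_withDensity_iff_integrable_smul' (measurable_gaussianPDF _ _)
        (Filter.Eventually.of_forall fun _ => gaussianPDF_lt_top)] at h
    simpa using h
  have hd (y : ℝ) : HasDerivAt (gaussianPDFReal 0 1) (gaussianPDFReal 0 1 y * -y) y := by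
    rw [gaussianPDFReal_def]
    have h1 : HasDerivAt (fun x : ℝ => -(x - 0) ^ 2 / (2 * ((1 : NNReal) : ℝ))) (-y) y := by
      have := (((hasDerivAt_id y).sub_const 0).pow 2).neg.div_const (2 * ((1 : NNReal) : ℝ))
      convert! this using 1
      simp
      ring
    convert! h1.exp.const_mul _ using 1
    ring
  have h0 := integral_eq_zero_of_hasDerivAt_of_integrable
    (f' := fun y => gaussianPDFReal 0 1 y * (p.derivative - Polynomial.X * p).eval y)
    (fun y => by
      convert! (hd y).mul (p.hasDerivAt y) using 1
      simp
      ring) (key _) (key p)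
  have h1 := integral_gaussianReal_eq_integral_smul (μ := 0) (v := 1)
    (f := fun y => (p.derivative - Polynomial.X * p).eval y) one_ne_zero
  simp only [smul_eq_mul] at h1
  rw [h0, Polynomial.integral_eval_sub_gaussianReal] at h1
  linarith

theorem Polynomial.integral_mul_hermiteReal_succ (p : Polynomial ℝ) (b : ℕ) :
    ∫ y, (p * hermiteReal (b + 1)).eval y ∂(gaussianReal 0 1) =
      ∫ y, (p.derivative * hermiteReal b).eval y ∂(gaussianReal 0 1) := by
  have h := Polynomial.integral_X_mul_gaussianReal (p * hermiteReal b)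
  have e : p * hermiteReal (b + 1) =
      Polynomial.X * (p * hermiteReal b) - p * (hermiteReal b).derivative := by
    rw [hermiteReal_succ]; ring
  rw [e, Polynomial.integral_eval_sub_gaussianReal, h, Polynomial.derivative_mul,
    Polynomial.integral_eval_add_gaussianReal]
  ring

/-- The polynomial `y ↦ H_k(s·x + t·y)`. -/
noncomputable def hermiteAffine (s t x : ℝ) (k : ℕ) : Polynomial ℝ :=
  (hermiteReal k).comp (Polynomial.C (s * x) + Polynomial.C t * Polynomial.X)

theorem eval_hermiteAffine (s t x : ℝ) (k : ℕ) (y : ℝ) :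
    (hermiteAffine s t x k).eval y = (hermiteReal k).eval (s * x + t * y) := by
  simp [hermiteAffine]

theorem derivative_hermiteAffine_succ (s t x : ℝ) (k : ℕ) :
    (hermiteAffine s t x (k + 1)).derivative =
      Polynomial.C (t * (k + 1)) * hermiteAffine s t x k := by
  simp [hermiteAffine, Polynomial.derivative_comp, derivative_hermiteReal_succ, mul_assoc]

/-- Mehler's formula: the Ornstein–Uhlenbeck operator acts diagonally on Hermite polynomials. -/
theorem integral_hermiteAffine {s t : ℝ} (hst : s ^ 2 + t ^ 2 = 1) (x : ℝ) (k : ℕ) :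
    ∫ y, (hermiteAffine s t x k).eval y ∂(gaussianReal 0 1) =
      s ^ k * (hermiteReal k).eval x := by
  induction k using Nat.twoStepInduction with
  | zero => simp [hermiteAffine, hermiteReal_zero]
  | one =>
    have e : hermiteAffine s t x 1 =
        Polynomial.C (s * x) + Polynomial.X * Polynomial.C t := by
      simp [hermiteAffine, hermiteReal_succ, hermiteReal_zero]
    rw [e, Polynomial.integral_eval_add_gaussianReal, Polynomial.integral_X_mul_gaussianReal]
    simp [hermiteReal_succ, hermiteReal_zero]
  | more k ih0 ih1 =>
    have e : hermiteAffine s t x (k + 2) =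
        Polynomial.C (s * x) * hermiteAffine s t x (k + 1) +
          Polynomial.X * (Polynomial.C t * hermiteAffine s t x (k + 1)) -
          Polynomial.C ((k : ℝ) + 1) * hermiteAffine s t x k := by
      simp [hermiteAffine, hermiteReal_add_two]
      ring
    rw [e, Polynomial.integral_eval_sub_gaussianReal, Polynomial.integral_eval_add_gaussianReal,
      Polynomial.integral_X_mul_gaussianReal,
      Polynomial.derivative_C_mul, derivative_hermiteAffine_succ]
    simp only [Polynomial.eval_mul, Polynomial.eval_C, integral_const_mul]
    rw [ih0, ih1, hermiteReal_add_two]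
    simp
    linear_combination (s ^ k * (k + 1) * Polynomial.eval x (hermiteReal k)) * hst

theorem integral_hermiteAffine_mul_hermiteReal {s t : ℝ} (hst : s ^ 2 + t ^ 2 = 1) (x : ℝ)
    (k b : ℕ) :
    ∫ y, (hermiteAffine s t x k * hermiteReal b).eval y ∂(gaussianReal 0 1) =
      k.descFactorial b * (s ^ (k - b) * t ^ b) * (hermiteReal (k - b)).eval x := by
  induction b generalizing k with
  | zero => simp [hermiteReal_zero, integral_hermiteAffine hst]
  | succ b ih =>
    rw [Polynomial.integral_mul_hermiteReal_succ]
    cases k with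
    | zero => simp [hermiteAffine, hermiteReal_zero]
    | succ k =>
      rw [derivative_hermiteAffine_succ, mul_assoc]
      simp only [Polynomial.eval_C_mul, integral_const_mul]
      rw [ih, Nat.succ_descFactorial_succ]
      simp
      ring

theorem integral_hermiteFn_affine_mul_hermiteFn {s t : ℝ} (hst : s ^ 2 + t ^ 2 = 1) (x : ℝ)
    (k b : ℕ) :
    ∫ y, hermiteFn k (s * x + t * y) * hermiteFn b y ∂(gaussianReal 0 1) =
      Real.sqrt (k.choose b) * (s ^ (k - b) * t ^ b) * hermiteFn (k - b) x := by
  have h := integral_hermiteAffine_mul_hermiteReal hst x k b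
  have e (y : ℝ) : hermiteFn k (s * x + t * y) * hermiteFn b y =
      (Real.sqrt k.factorial * Real.sqrt b.factorial)⁻¹ *
        (hermiteAffine s t x k * hermiteReal b).eval y := by
    rw [Polynomial.eval_mul, eval_hermiteAffine, hermiteFn_eq, hermiteFn_eq]
    field_simp
  simp_rw [e]
  rw [integral_const_mul, h, hermiteFn_eq]
  rcases lt_or_ge k b with hkb | hkb
  · simp [Nat.descFactorial_of_lt hkb, Nat.choose_eq_zero_of_lt hkb]
  · have hb : (0 : ℝ) < b.factorial := by positivity
    have hk : (0 : ℝ) < k.factorial := by positivity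
    have hd : (0 : ℝ) < (k - b).factorial := by positivity
    have h1 : (k.descFactorial b : ℝ) = k.factorial / (k - b).factorial := by
      rw [eq_div_iff hd.ne', mul_comm]
      exact_mod_cast Nat.factorial_mul_descFactorial hkb
    rw [h1, Nat.cast_choose ℝ hkb, Real.sqrt_div hk.le, Real.sqrt_mul hb.le]
    have := Real.sq_sqrt hb.le
    have h2 := Real.sq_sqrt hk.le
    have h3 := Real.sq_sqrt hd.le
    field_simp
    rw [h2, h3]
    field_simp

theorem integral_hermiteFn_mul_hermiteFn (k b : ℕ) :
    ∫ y, hermiteFn k y * hermiteFn b y ∂(gaussianReal 0 1) = if k = b then 1 else 0 := by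
  have h := integral_hermiteFn_affine_mul_hermiteFn (s := 0) (t := 1) (by norm_num) 0 k b
  simp only [zero_mul, zero_add, one_mul, one_pow, mul_one] at h
  rw [h]
  rcases lt_trichotomy k b with hkb | rfl | hkb
  · simp [Nat.choose_eq_zero_of_lt hkb, hkb.ne]
  · simp [hermiteFn_zero]
  · simp [(Nat.sub_pos_of_lt hkb).ne', hkb.ne']

theorem integrable_hermiteFn_affine_mul_hermiteFn (s t x : ℝ) (k b : ℕ) :
    Integrable (fun y => hermiteFn k (s * x + t * y) * hermiteFn b y) (gaussianReal 0 1) := by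
  have h := (hermiteAffine s t x k * hermiteReal b).integrable_eval_gaussianReal.const_mul
    (Real.sqrt k.factorial * Real.sqrt b.factorial)⁻¹
  refine h.congr (Filter.Eventually.of_forall fun y => ?_)
  simp only [Polynomial.eval_mul, eval_hermiteAffine, hermiteFn_eq]
  field_simp

/-- The factor by which the zoom at noise rates `s`, `t` moves Hermite weight from `γ` to `β`. -/
noncomputable def zoomFactor {n : ℕ} (s t : ℝ) (γ β : Fin n → ℕ) : ℝ :=
  ∏ j, (Real.sqrt ((γ j).choose (β j)) * (s ^ (γ j - β j) * t ^ (β j)))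

theorem zoomFactor_eq_zero {n : ℕ} (s t : ℝ) {γ β : Fin n → ℕ} (h : ¬ β ≤ γ) :
    zoomFactor s t γ β = 0 := by
  obtain ⟨j, hj⟩ := not_forall.1 h
  exact Finset.prod_eq_zero (Finset.mem_univ j) (by simp [Nat.choose_eq_zero_of_lt (not_le.1 hj)])

theorem zoomFactor_sq {n : ℕ} {lam : ℝ} (h0 : 0 ≤ lam) (h1 : lam ≤ 1) (γ β : Fin n → ℕ) :
    zoomFactor (Real.sqrt (1 - lam)) (Real.sqrt lam) γ β ^ 2 =
      ∏ j, ((γ j).choose (β j) : ℝ) * lam ^ (β j) * (1 - lam) ^ (γ j - β j) := by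
  rw [zoomFactor, ← Finset.prod_pow]
  refine Finset.prod_congr rfl fun j _ => ?_
  rw [mul_pow, mul_pow, Real.sq_sqrt (Nat.cast_nonneg _), pow_right_comm, pow_right_comm _ _ 2,
    Real.sq_sqrt h0, Real.sq_sqrt (sub_nonneg.2 h1)]
  ring

theorem integrable_hermiteMv_affine_mul_hermiteMv {n : ℕ} (s t : ℝ) (x : Fin n → ℝ)
    (γ β : Fin n → ℕ) :
    Integrable (fun y => hermiteMv γ (fun i => s * x i + t * y i) * hermiteMv β y)
      (gaussianN n) := by
  simp only [hermiteMv, ← Finset.prod_mul_distrib]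
  exact Integrable.fintype_prod
    (f := fun i y => hermiteFn (γ i) (s * x i + t * y) * hermiteFn (β i) y)
    fun i => integrable_hermiteFn_affine_mul_hermiteFn s t (x i) (γ i) (β i)

theorem integral_hermiteMv_affine_mul_hermiteMv {n : ℕ} {s t : ℝ} (hst : s ^ 2 + t ^ 2 = 1)
    (x : Fin n → ℝ) (γ β : Fin n → ℕ) :
    ∫ y, hermiteMv γ (fun i => s * x i + t * y i) * hermiteMv β y ∂(gaussianN n) =
      zoomFactor s t γ β * hermiteMv (γ - β) x := by
  simp only [hermiteMv, ← Finset.prod_mul_distrib, zoomFactor]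
  refine (integral_fintype_prod_eq_prod
    (fun i y => hermiteFn (γ i) (s * x i + t * y) * hermiteFn (β i) y)).trans ?_
  exact Finset.prod_congr rfl fun i _ =>
    integral_hermiteFn_affine_mul_hermiteFn hst (x i) (γ i) (β i)

theorem integrable_hermiteMv_mul_hermiteMv {n : ℕ} (α β : Fin n → ℕ) :
    Integrable (fun y => hermiteMv α y * hermiteMv β y) (gaussianN n) := by
  simpa using integrable_hermiteMv_affine_mul_hermiteMv 0 1 0 α β

theorem integral_hermiteMv_mul_hermiteMv {n : ℕ} (α β : Fin n → ℕ) :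
    ∫ y, hermiteMv α y * hermiteMv β y ∂(gaussianN n) = if α = β then 1 else 0 := by
  simp only [hermiteMv, ← Finset.prod_mul_distrib]
  refine (integral_fintype_prod_eq_prod
    (fun i y => hermiteFn (α i) y * hermiteFn (β i) y)).trans ?_
  simp_rw [integral_hermiteFn_mul_hermiteFn, funext_iff]
  simp [Finset.prod_ite_zero]

theorem mul_eval_hermiteReal (k : ℕ) (x : ℝ) :
    x * (hermiteReal k).eval x =
      (hermiteReal (k + 1)).eval x + k * (hermiteReal (k - 1)).eval x := by
  cases k with
  | zero => simp [hermiteReal_succ, hermiteReal_zero]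
  | succ k => simp [hermiteReal_add_two]

/-- The three-term recurrence for the normalized Hermite polynomials. -/
theorem mul_hermiteFn (k : ℕ) :
    ∃ a b : ℝ, ∀ x, x * hermiteFn k x = a * hermiteFn (k + 1) x + b * hermiteFn (k - 1) x := by
  refine ⟨Real.sqrt (k + 1).factorial / Real.sqrt k.factorial,
    k * Real.sqrt (k - 1).factorial / Real.sqrt k.factorial, fun x => ?_⟩
  have h := mul_eval_hermiteReal k x
  simp only [hermiteFn_eq]
  have h1 : Real.sqrt (k + 1).factorial ≠ 0 := by positivity
  field_simp
  linear_combination h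

theorem hermiteMv_update {n : ℕ} (α : Fin n → ℕ) (i : Fin n) (k : ℕ) (x : Fin n → ℝ) :
    hermiteMv (Function.update α i k) x =
      hermiteFn k (x i) * ∏ j ∈ Finset.univ.erase i, hermiteFn (α j) (x j) := by
  rw [hermiteMv, ← Finset.mul_prod_erase _ _ (Finset.mem_univ i)]
  congr 1
  · simp
  · refine Finset.prod_congr rfl fun j hj => ?_
    rw [Function.update_of_ne (Finset.ne_of_mem_erase hj)]

theorem eval_mem_span_hermiteMv {n : ℕ} (g : MvPolynomial (Fin n) ℝ) :
    (fun x => eval x g) ∈ Submodule.span ℝ (Set.range (hermiteMv (n := n))) := by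
  induction g using MvPolynomial.induction_on with
  | C a =>
    have e : (fun x => eval x (C a)) = a • hermiteMv (n := n) 0 := by
      ext x
      simp [hermiteMv, hermiteFn_zero]
    rw [e]
    exact Submodule.smul_mem _ _ (Submodule.subset_span ⟨_, rfl⟩)
  | add p q hp hq =>
    simp only [map_add]
    exact Submodule.add_mem _ hp hq
  | mul_X p i hp =>
    simp only [map_mul, eval_X]
    refine Submodule.span_induction
      (p := fun f _ => (fun x => f x * x i) ∈ Submodule.span ℝ (Set.range (hermiteMv (n := n))))
      ?_ ?_ ?_ ?_ hp
    · rintro _ ⟨α, rfl⟩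
      obtain ⟨a, b, hab⟩ := mul_hermiteFn (α i)
      have e : (fun x => hermiteMv α x * x i) =
          a • hermiteMv (Function.update α i (α i + 1)) +
            b • hermiteMv (Function.update α i (α i - 1)) := by
        ext x
        have h := hermiteMv_update α i (α i) x
        rw [Function.update_eq_self] at h
        simp only [Pi.add_apply, Pi.smul_apply, smul_eq_mul, hermiteMv_update, h]
        linear_combination (∏ j ∈ Finset.univ.erase i, hermiteFn (α j) (x j)) * hab (x i)
      rw [e]
      exact Submodule.add_mem _ (Submodule.smul_mem _ _ (Submodule.subset_span ⟨_, rfl⟩))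
        (Submodule.smul_mem _ _ (Submodule.subset_span ⟨_, rfl⟩))
    · simp only [Pi.zero_apply, zero_mul]
      exact Submodule.zero_mem _
    · intro f g _ _ hf hg
      simp only [Pi.add_apply, add_mul]
      exact Submodule.add_mem _ hf hg
    · intro c f _ hf
      simp only [Pi.smul_apply, smul_eq_mul, mul_assoc]
      exact Submodule.smul_mem _ c hf

theorem exists_hermite_expansion {n : ℕ} (g : MvPolynomial (Fin n) ℝ) :
    ∃ a : (Fin n → ℕ) →₀ ℝ, ∀ x, eval x g = ∑ γ ∈ a.support, a γ * hermiteMv γ x := by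
  obtain ⟨a, ha⟩ := Finsupp.mem_span_range_iff_exists_finsupp.1 (eval_mem_span_hermiteMv g)
  refine ⟨a, fun x => ?_⟩
  rw [← congrFun ha x]
  simp [Finsupp.sum]

theorem hermiteCoeff_eq_of_expansion {n : ℕ} {g : MvPolynomial (Fin n) ℝ}
    {a : (Fin n → ℕ) →₀ ℝ} (ha : ∀ x, eval x g = ∑ γ ∈ a.support, a γ * hermiteMv γ x)
    (α : Fin n → ℕ) : hermiteCoeff g α = a α := by
  simp only [hermiteCoeff, hermiteCoeffF, ha, Finset.sum_mul, mul_assoc]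
  rw [integral_finsetSum _ fun γ _ => (integrable_hermiteMv_mul_hermiteMv γ α).const_mul _]
  simp only [integral_const_mul, integral_hermiteMv_mul_hermiteMv]
  simpa using Eq.symm

theorem eval_zoom {n : ℕ} (g : MvPolynomial (Fin n) ℝ) (lam : ℝ) (x y : Fin n → ℝ) :
    eval y (zoom g lam x) =
      eval (fun i => Real.sqrt (1 - lam) * x i + Real.sqrt lam * y i) g := by
  induction g using MvPolynomial.induction_on with
  | C a => simp [zoom]
  | add p q hp hq => simpa [zoom] using congrArg₂ (· + ·) hp hq
  | mul_X p i hp => simpa [zoom] using Or.inl hp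

theorem hermiteCoeff_zoom {n : ℕ} {g : MvPolynomial (Fin n) ℝ} {a : (Fin n → ℕ) →₀ ℝ}
    (ha : ∀ x, eval x g = ∑ γ ∈ a.support, a γ * hermiteMv γ x) {lam : ℝ} (h0 : 0 ≤ lam)
    (h1 : lam ≤ 1) (x : Fin n → ℝ) (β : Fin n → ℕ) :
    hermiteCoeff (zoom g lam x) β = ∑ γ ∈ a.support,
      a γ * zoomFactor (Real.sqrt (1 - lam)) (Real.sqrt lam) γ β * hermiteMv (γ - β) x := by
  have hst : Real.sqrt (1 - lam) ^ 2 + Real.sqrt lam ^ 2 = 1 := by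
    rw [Real.sq_sqrt h0, Real.sq_sqrt (sub_nonneg.2 h1)]
    ring
  simp only [hermiteCoeff, hermiteCoeffF, eval_zoom, ha, Finset.sum_mul, mul_assoc]
  rw [integral_finsetSum _ fun γ _ =>
    (integrable_hermiteMv_affine_mul_hermiteMv _ _ x γ β).const_mul _]
  simp only [integral_const_mul, integral_hermiteMv_affine_mul_hermiteMv hst]

/-- Parseval's identity for finite combinations of distinct Hermite polynomials. -/
theorem integral_sum_hermiteMv_sq {n : ℕ} {ι : Type*} (S : Finset ι) (c : ι → ℝ)
    (α : ι → Fin n → ℕ) (hα : ∀ i ∈ S, ∀ j ∈ S, c i ≠ 0 → c j ≠ 0 → α i = α j → i = j) :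
    ∫ x, (∑ i ∈ S, c i * hermiteMv (α i) x) ^ 2 ∂(gaussianN n) = ∑ i ∈ S, c i ^ 2 := by
  have e (x : Fin n → ℝ) : (∑ i ∈ S, c i * hermiteMv (α i) x) ^ 2 =
      ∑ i ∈ S, ∑ j ∈ S, c i * c j * (hermiteMv (α i) x * hermiteMv (α j) x) := by
    rw [sq, Finset.sum_mul_sum]
    exact Finset.sum_congr rfl fun i _ => Finset.sum_congr rfl fun j _ => by ring
  have hi (i j : ι) := (integrable_hermiteMv_mul_hermiteMv (α i) (α j)).const_mul (c i * c j)
  simp only [e]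
  rw [integral_finsetSum _ fun i _ => integrable_finsetSum _ fun j _ => hi i j]
  refine Finset.sum_congr rfl fun i hiS => ?_
  rw [integral_finsetSum _ fun j _ => hi i j]
  simp only [integral_const_mul, integral_hermiteMv_mul_hermiteMv]
  rw [Finset.sum_eq_single_of_mem i hiS]
  · simp [sq]
  · intro j hj hji
    by_cases h : α i = α j
    · by_cases hci : c i = 0
      · simp [hci]
      by_cases hcj : c j = 0
      · simp [hcj]
      exact absurd (hα i hiS j hj hci hcj h).symm hji
    · simp [h]

/-- Expected squared Hermite coefficients of a random zoom: for a polynomial `g`,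
`0 ≤ λ ≤ 1` and a multi-index `β`,
`E_{x ∼ N(0,1)^n}[(ĝ_{λ|x}(β))²]
  = Σ_{γ ≥ β} (∏_j C(γ_j, β_j)·λ^{β_j}·(1-λ)^{γ_j - β_j})·ĝ(γ)²`. -/
theorem expected_sq_hermite_coeff_of_zoom (n : ℕ) (g : MvPolynomial (Fin n) ℝ)
    (lam : ℝ) (h0 : 0 ≤ lam) (h1 : lam ≤ 1) (β : Fin n → ℕ) :
    (∫ x, (hermiteCoeff (zoom g lam x) β) ^ 2 ∂(gaussianN n)) =
      ∑' γ : Fin n → ℕ,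
        if ∀ j, β j ≤ γ j then
          (∏ j, ((γ j).choose (β j) : ℝ) * lam ^ (β j) * (1 - lam) ^ (γ j - β j)) *
            hermiteCoeff g γ ^ 2
        else 0 := by
  obtain ⟨a, ha⟩ := exists_hermite_expansion g
  simp only [hermiteCoeff_zoom ha h0 h1, hermiteCoeff_eq_of_expansion ha]
  rw [integral_sum_hermiteMv_sq]
  · rw [tsum_eq_sum (s := a.support)]
    · refine Finset.sum_congr rfl fun γ _ => ?_
      split_ifs with h
      · rw [mul_pow, zoomFactor_sq h0 h1, mul_comm]
      · simp [zoomFactor_eq_zero _ _ h]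
    · intro γ hγ
      simp [Finsupp.notMem_support_iff.1 hγ]
  · intro γ _ δ _ hγ hδ h
    have hle {γ : Fin n → ℕ}
        (h : a γ * zoomFactor (Real.sqrt (1 - lam)) (Real.sqrt lam) γ β ≠ 0) : β ≤ γ := by
      by_contra hn
      exact h (by rw [zoomFactor_eq_zero _ _ hn, mul_zero])
    rw [← tsub_add_cancel_of_le (hle hγ), h, tsub_add_cancel_of_le (hle hδ)]
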